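/- Let n ≥ 3 be odd. Suppose π_0, …, π_{n−1} and π are permutations of Fin n such that: (i) for all i ≠ j, the permutation π_i⁻¹ ∘ π_j is a single cycle whose support is all of Fin n; (ii) for each i, the permutation π⁻¹ ∘ π_i has exactly one fixed point; and (iii) there is a partition of Fin n into two disjoint sets I₁ and I₂ such that for each i, every orbit of π⁻¹ ∘ π_i of size at least 2 contains an element of I₁ and an element of I₂. Then K_{n,n} admits an acyclic proper edge coloring with n+2 colors, and consequently a'(K_{n,n}) = n+2. -/

import Mathlib

open SimpleGraph

/-- A proper edge coloring of `G` with `k` colors: any two distinct edges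
sharing a vertex receive different colors. -/
def IsProperEdgeColoring {V : Type*} (G : SimpleGraph V) {k : ℕ}
    (C : G.edgeSet → Fin k) : Prop :=
  ∀ e f : G.edgeSet, e ≠ f →
    (∃ v : V, v ∈ (e : Sym2 V) ∧ v ∈ (f : Sym2 V)) → C e ≠ C f

/-- An edge coloring is acyclic if no cycle of `G` is bichromatic, i.e. no cycle
has all its edges colored with only two colors. -/
def IsAcyclicEdgeColoring {V : Type*} (G : SimpleGraph V) {k : ℕ}
    (C : G.edgeSet → Fin k) : Prop :=
  ∀ (v : V) (w : G.Walk v v), w.IsCycle →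
    ¬ ∃ c₁ c₂ : Fin k, ∀ (e : Sym2 V) (he : e ∈ w.edges),
      C ⟨e, w.edges_subset_edgeSet he⟩ = c₁ ∨ C ⟨e, w.edges_subset_edgeSet he⟩ = c₂

/-- The acyclic chromatic index: the least `k` such that `G` admits an acyclic
proper edge coloring with `k` colors. -/
noncomputable def acyclicChromaticIndex {V : Type*} (G : SimpleGraph V) : ℕ :=
  sInf {k : ℕ | ∃ C : G.edgeSet → Fin k,
    IsProperEdgeColoring G C ∧ IsAcyclicEdgeColoring G C}

/-- The orbit of `u` under `f`: the set `{fᵏ(u) : k ∈ ℕ}`. -/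
def orbit {α : Type*} (f : α → α) (u : α) : Set α :=
  {v | ∃ k : ℕ, f^[k] u = v}

abbrev KB (n : ℕ) : SimpleGraph (Fin n ⊕ Fin n) := completeBipartiteGraph (Fin n) (Fin n)

def colOf {n k : ℕ} (C : (KB n).edgeSet → Fin k) (m r : Fin n) : Fin k :=
  C ⟨s(Sum.inl m, Sum.inr r), by simp [KB]⟩

/-- A closed two-colored configuration. -/
def Bi {n k : ℕ} (col : Fin n → Fin n → Fin k) (T R : Set (Fin n)) (c d : Fin k) : Prop :=
  c ≠ d ∧ T.Nonempty ∧ (∀ m ∈ T, (∃ r ∈ R, col m r = c) ∧ ∃ r ∈ R, col m r = d) ∧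
    (∀ r ∈ R, (∃ m ∈ T, col m r = c) ∧ ∃ m ∈ T, col m r = d)

def RowInj {n k : ℕ} (col : Fin n → Fin n → Fin k) : Prop :=
  (∀ m r r', col m r = col m r' → r = r') ∧ (∀ m m' r, col m r = col m' r → m = m')

lemma edge_form {n : ℕ} (e : (KB n).edgeSet) :
    ∃ m r : Fin n, ∃ h, e = ⟨s(Sum.inl m, Sum.inr r), h⟩ := by
  obtain ⟨e, he⟩ := e
  induction e using Sym2.ind with
  | _ x y =>
    rcases x with x | x <;> rcases y with y | y
    · simp [KB] at he
    · exact ⟨x, y, he, rfl⟩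
    · exact ⟨y, x, by simp [KB], by simp [Sym2.eq_swap]⟩
    · simp [KB] at he

lemma proper_iff {n k : ℕ} (C : (KB n).edgeSet → Fin k) :
    IsProperEdgeColoring (KB n) C ↔ RowInj (colOf C) := by
  constructor
  · intro h
    constructor
    · intro m r r' hc
      by_contra hne
      refine h ⟨s(Sum.inl m, Sum.inr r), by simp [KB]⟩ ⟨s(Sum.inl m, Sum.inr r'), by simp [KB]⟩
        ?_ ⟨Sum.inl m, by simp, by simp⟩ hc
      simpa using hne
    · intro m m' r hc
      by_contra hne
      refine h ⟨s(Sum.inl m, Sum.inr r), by simp [KB]⟩ ⟨s(Sum.inl m', Sum.inr r), by simp [KB]⟩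
        ?_ ⟨Sum.inr r, by simp, by simp⟩ hc
      simpa using hne
  · rintro ⟨h1, h2⟩ e f hne ⟨v, hve, hvf⟩ hc
    obtain ⟨m, r, he, rfl⟩ := edge_form e
    obtain ⟨m', r', hf, rfl⟩ := edge_form f
    apply hne
    simp only [Sym2.mem_iff] at hve hvf
    rcases hve with rfl | rfl
    · have : m = m' := by simpa using hvf
      subst this
      have := h1 m r r' hc
      subst this; rfl
    · have : r = r' := by simpa using hvf
      subst this
      have := h2 m m' r hc
      subst this; rfl

lemma bi_of_cycle {n k : ℕ} (C : (KB n).edgeSet → Fin k) (hp : RowInj (colOf C))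
    (hno : ∀ T R c d, ¬ Bi (colOf C) T R c d) : IsAcyclicEdgeColoring (KB n) C := by
  rintro v w hw ⟨c, d, hcd⟩
  have key : ∀ x ∈ w.support, ∃ y z, y ≠ z ∧ s(x, y) ∈ w.edges ∧ s(x, z) ∈ w.edges := by
    intro x hx
    obtain ⟨y, z, hyz, hs⟩ := Set.ncard_eq_two.1 (hw.ncard_neighborSet_toSubgraph_eq_two hx)
    refine ⟨y, z, hyz, ?_, ?_⟩
    · rw [← Walk.adj_toSubgraph_iff_mem_edges, ← Subgraph.mem_neighborSet, hs]; simp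
    · rw [← Walk.adj_toSubgraph_iff_mem_edges, ← Subgraph.mem_neighborSet, hs]; simp
  have hcol : ∀ m r : Fin n, s(Sum.inl m, Sum.inr r) ∈ w.edges →
      colOf C m r = c ∨ colOf C m r = d := fun m r h => hcd _ h
  have kL : ∀ m : Fin n, Sum.inl m ∈ w.support → ∃ r r' : Fin n, r ≠ r' ∧
      s(Sum.inl m, Sum.inr r) ∈ w.edges ∧ s(Sum.inl m, Sum.inr r') ∈ w.edges := by
    intro m hm
    obtain ⟨y, z, hyz, h1, h2⟩ := key _ hm
    have e1 := w.edges_subset_edgeSet h1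
    have e2 := w.edges_subset_edgeSet h2
    rcases y with y | y <;> rcases z with z | z <;> simp [KB] at e1 e2
    exact ⟨y, z, by simpa using hyz, h1, h2⟩
  have kR : ∀ r : Fin n, Sum.inr r ∈ w.support → ∃ m m' : Fin n, m ≠ m' ∧
      s(Sum.inl m, Sum.inr r) ∈ w.edges ∧ s(Sum.inl m', Sum.inr r) ∈ w.edges := by
    intro r hr
    obtain ⟨y, z, hyz, h1, h2⟩ := key _ hr
    have e1 := w.edges_subset_edgeSet h1
    have e2 := w.edges_subset_edgeSet h2
    rcases y with y | y <;> rcases z with z | z <;> simp [KB] at e1 e2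
    exact ⟨y, z, by simpa using hyz, by rwa [Sym2.eq_swap], by rwa [Sym2.eq_swap]⟩
  have hL : ∃ m : Fin n, Sum.inl m ∈ w.support := by
    have hv := w.start_mem_support
    rcases v with v | v
    · exact ⟨v, hv⟩
    · obtain ⟨m, _, _, h, _⟩ := kR v hv
      exact ⟨m, w.fst_mem_support_of_mem_edges h⟩
  have hcd' : c ≠ d := by
    rintro rfl
    obtain ⟨m, hm⟩ := hL
    obtain ⟨r, r', hne, h1, h2⟩ := kL m hm
    have a1 := hcol _ _ h1
    have a2 := hcol _ _ h2
    exact hne (hp.1 m r r' (by grind))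
  refine hno {m | Sum.inl m ∈ w.support} {r | Sum.inr r ∈ w.support} c d ⟨hcd', hL, ?_, ?_⟩
  · intro m hm
    obtain ⟨r, r', hne, h1, h2⟩ := kL m hm
    have a1 := hcol _ _ h1
    have a2 := hcol _ _ h2
    have a3 : colOf C m r ≠ colOf C m r' := fun h => hne (hp.1 _ _ _ h)
    have b1 := w.snd_mem_support_of_mem_edges h1
    have b2 := w.snd_mem_support_of_mem_edges h2
    simp only [Set.mem_ofPred_eq]
    grind
  · intro r hr
    obtain ⟨m, m', hne, h1, h2⟩ := kR r hr
    have a1 := hcol _ _ h1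
    have a2 := hcol _ _ h2
    have a3 : colOf C m r ≠ colOf C m' r := fun h => hne (hp.2 _ _ _ h)
    have b1 := w.fst_mem_support_of_mem_edges h1
    have b2 := w.fst_mem_support_of_mem_edges h2
    simp only [Set.mem_ofPred_eq]
    grind

lemma not_bi_of_acyclic {n k : ℕ} (C : (KB n).edgeSet → Fin k)
    (hac : IsAcyclicEdgeColoring (KB n) C) (T R : Set (Fin n)) (c d : Fin k) :
    ¬ Bi (colOf C) T R c d := by
  rintro ⟨hcd, ⟨m0, hm0⟩, hT, hR⟩
  let K : SimpleGraph (Fin n ⊕ Fin n) := SimpleGraph.fromRel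
    (fun v w => ∃ m ∈ T, ∃ r ∈ R, v = Sum.inl m ∧ w = Sum.inr r ∧
      (colOf C m r = c ∨ colOf C m r = d))
  have hK : ∀ m ∈ T, ∀ r ∈ R, (colOf C m r = c ∨ colOf C m r = d) →
      K.Adj (Sum.inl m) (Sum.inr r) := by
    intro m hm r hr h
    simp only [K, SimpleGraph.fromRel_adj]
    exact ⟨by simp, Or.inl ⟨m, hm, r, hr, rfl, rfl, h⟩⟩
  have hK' : ∀ x y, K.Adj x y → ∃ m ∈ T, ∃ r ∈ R, s(x, y) = s(Sum.inl m, Sum.inr r) ∧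
      (colOf C m r = c ∨ colOf C m r = d) := by
    intro x y h
    simp only [K, SimpleGraph.fromRel_adj] at h
    rcases h with ⟨_, ⟨m, hm, r, hr, rfl, rfl, h⟩ | ⟨m, hm, r, hr, rfl, rfl, h⟩⟩
    · exact ⟨m, hm, r, hr, rfl, h⟩
    · exact ⟨m, hm, r, hr, Sym2.eq_swap, h⟩
  have hle : K ≤ KB n := by
    intro x y h
    obtain ⟨m, _, r, _, he, _⟩ := hK' x y h
    rw [← SimpleGraph.mem_edgeSet, he]
    simp [KB]
  have hA : K.IsAcyclic := by
    intro v w hw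
    refine hac v (w.mapLe hle) (hw.mapLe hle) ⟨c, d, ?_⟩
    intro e he
    have he' : e ∈ w.edges := by rwa [Walk.edges_mapLe_eq_edges] at he
    have := w.edges_subset_edgeSet he'
    induction e using Sym2.ind with
    | _ x y =>
      obtain ⟨m, _, r, _, hxy, h⟩ := hK' x y this
      simp only [hxy]
      exact h
  -- every non-isolated vertex has two neighbors
  have two : ∀ x y, K.Adj x y → ∃ y z, y ≠ z ∧ K.Adj x y ∧ K.Adj x z := by
    intro x y h
    obtain ⟨m, hm, r, hr, he, _⟩ := hK' x y h
    have hx : x = Sum.inl m ∨ x = Sum.inr r := by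
      have : x ∈ s(x, y) := by simp
      rw [he] at this
      simpa using this
    rcases hx with rfl | rfl
    · obtain ⟨⟨r1, hr1, e1⟩, ⟨r2, hr2, e2⟩⟩ := hT m hm
      refine ⟨Sum.inr r1, Sum.inr r2, ?_, hK _ hm _ hr1 (Or.inl e1), hK _ hm _ hr2 (Or.inr e2)⟩
      intro h
      have : r1 = r2 := by simpa using h
      subst this
      exact hcd (e1.symm.trans e2)
    · obtain ⟨⟨r1, hr1, e1⟩, ⟨r2, hr2, e2⟩⟩ := hR r hr
      refine ⟨Sum.inl r1, Sum.inl r2, ?_, (hK _ hr1 _ hr (Or.inl e1)).symm,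
        (hK _ hr2 _ hr (Or.inr e2)).symm⟩
      intro h
      have : r1 = r2 := by simpa using h
      subst this
      exact hcd (e1.symm.trans e2)
  have : Nonempty (Fin n ⊕ Fin n) := ⟨Sum.inl m0⟩
  obtain ⟨u, v, p, hp, hmax⟩ := Walk.exists_isPath_forall_isPath_length_le_length K
  obtain ⟨⟨r0, hr0, e0⟩, _⟩ := hT m0 hm0
  have hadj0 := hK m0 hm0 r0 hr0 (Or.inl e0)
  have hlen : 1 ≤ p.length := by
    have := hmax _ _ (Walk.cons hadj0 Walk.nil) (by simp [Walk.cons_isPath_iff])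
    simpa using this
  have hnil : ¬ p.Nil := by
    grind
  obtain ⟨y, z, hyz, hy, hz⟩ := two _ _ (p.adj_snd hnil)
  have hs : ∀ y, K.Adj u y → y = p.snd := by
    intro y hy
    apply hA.eq_snd_of_adj_start hp hy
    by_contra hns
    have := hmax _ _ (Walk.cons hy.symm p) (by simp [Walk.cons_isPath_iff, hp, hns])
    simp at this
  exact hyz ((hs y hy).trans (hs z hz).symm)

/-- Two permutations following colors on an orbit give a bichromatic configuration. -/
lemma bi_of_orbit {n k : ℕ} (col : Fin n → Fin n → Fin k) (f g : Equiv.Perm (Fin n))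
    (c d : Fin k) (hcd : c ≠ d) (u : Fin n)
    (h : ∀ v, (f⁻¹ * g).SameCycle u v → col v (f v) = c ∧ col v (g v) = d) :
    ∃ T R, Bi col T R c d := by
  refine ⟨{v | (f⁻¹ * g).SameCycle u v}, f '' {v | (f⁻¹ * g).SameCycle u v}, hcd,
    ⟨u, Equiv.Perm.SameCycle.refl _ _⟩, ?_, ?_⟩
  · intro m hm
    refine ⟨⟨f m, ⟨m, hm, rfl⟩, (h m hm).1⟩, ⟨g m, ⟨(f⁻¹ * g) m, ?_, by simp⟩, (h m hm).2⟩⟩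
    exact Equiv.Perm.sameCycle_apply_right.2 hm
  · rintro _ ⟨m, hm, rfl⟩
    have hm' : (f⁻¹ * g).SameCycle u ((f⁻¹ * g)⁻¹ m) := Equiv.Perm.sameCycle_apply_right.1 (by simpa using hm)
    refine ⟨⟨m, hm, (h m hm).1⟩, ⟨(f⁻¹ * g)⁻¹ m, hm', ?_⟩⟩
    have := (h _ hm').2
    simpa using this

lemma cycle_of_same {n : ℕ} (f : Equiv.Perm (Fin n)) (a : Fin n) (S : Finset (Fin n))
    (hS : 2 ≤ S.card) (haS : a ∈ S) (h : ∀ u ∈ S, f.SameCycle a u) (h' : ∀ u, u ∉ S → f u = u) :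
    Equiv.Perm.sign f = -(-1) ^ S.card := by
  obtain ⟨b, hb, hba⟩ := Finset.exists_mem_ne (by omega : 1 < S.card) a
  have hfa : f a ≠ a := fun hfa => hba ((h b hb).eq_of_left hfa).symm
  have hc : f.IsCycle := by
    refine ⟨a, hfa, fun y hy => h y ?_⟩
    by_contra hn
    exact hy (h' y hn)
  have hsup : f.support = S := by
    ext u
    rw [Equiv.Perm.mem_support]
    constructor
    · intro hu
      by_contra hn
      exact hu (h' u hn)
    · intro hu hfu
      exact hfa ((h u hu).apply_eq_self_iff.2 hfu)
  rw [hc.sign, hsup]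

lemma full_perm {n k : ℕ} (col : Fin n → Fin n → Fin k) (hp : RowInj col) (c : Fin k)
    (h : ∀ m, ∃ r, col m r = c) : ∃ σ : Equiv.Perm (Fin n), ∀ m, col m (σ m) = c := by
  choose s hs using h
  have hinj : Function.Injective s := by
    intro m m' he
    apply hp.2 m m' (s m)
    rw [hs, he, hs]
  exact ⟨Equiv.ofBijective s (Finite.injective_iff_bijective.1 hinj), fun m => by simpa using hs m⟩

lemma part_perm {n k : ℕ} (col : Fin n → Fin n → Fin k) (hp : RowInj col) (c : Fin k)
    (a b : Fin n) (h : ∀ m, m ≠ a → ∃ r, col m r = c) (hb : ∀ m, col m b ≠ c) :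
    ∃ σ : Equiv.Perm (Fin n), σ a = b ∧ ∀ m, m ≠ a → col m (σ m) = c := by
  classical
  have h' : ∀ m, ∃ r, (m = a → r = b) ∧ (m ≠ a → col m r = c) := by
    intro m
    by_cases hm : m = a
    · exact ⟨b, fun _ => rfl, fun h => (h hm).elim⟩
    · obtain ⟨r, hr⟩ := h m hm
      exact ⟨r, fun h => (hm h).elim, fun _ => hr⟩
  choose s hs1 hs2 using h'
  have hinj : Function.Injective s := by
    intro m m' he
    by_cases hm : m = a <;> by_cases hm' : m' = a
    · rw [hm, hm']
    · exact absurd (by rw [← hs1 m hm, he]; exact hs2 m' hm') (hb m')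
    · exact absurd (by rw [← hs1 m' hm', ← he]; exact hs2 m hm) (hb m)
    · apply hp.2 m m' (s m)
      rw [hs2 m hm, he, hs2 m' hm']
  exact ⟨Equiv.ofBijective s (Finite.injective_iff_bijective.1 hinj),
    by simpa using hs1 a rfl, fun m hm => by simpa using hs2 m hm⟩

/-- Each row misses a unique colour, when there are `n + 1` colours. -/
lemma missing {n : ℕ} (f : Fin n → Fin (n + 1)) (hf : Function.Injective f) :
    ∃ c, ∀ d, (∀ r, f r ≠ d) ↔ d = c := by
  classical
  have hcard : (Finset.univ.image f)ᶜ.card = 1 := by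
    rw [Finset.card_compl, Finset.card_image_of_injective _ hf]
    simp
  obtain ⟨c, hc⟩ := Finset.card_eq_one.1 hcard
  refine ⟨c, fun d => ?_⟩
  rw [← Finset.mem_singleton, ← hc]
  simp

/-- An almost-surjective missing-colour map is injective. -/
lemma almost {n : ℕ} (μ : Fin n → Fin (n + 1))
    (h : ∀ c d, (∀ m, μ m ≠ c) → (∀ m, μ m ≠ d) → c = d) : Function.Injective μ := by
  classical
  have hcard : (Finset.univ.image μ)ᶜ.card ≤ 1 := by
    rw [Finset.card_le_one]
    intro c hc d hd
    simp at hc hd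
    exact h c d hc hd
  rw [Finset.card_compl, Fintype.card_fin] at hcard
  have h1 : (Finset.univ.image μ).card ≤ n := by
    simpa using Finset.card_image_le (s := Finset.univ) (f := μ)
  have : (Finset.univ.image μ).card = (Finset.univ : Finset (Fin n)).card := by
    simp; omega
  exact fun x y hxy => Finset.card_image_iff.1 this (by simp) (by simp) hxy

lemma lower {n : ℕ} (hn : 3 ≤ n) (hodd : Odd n) (col : Fin n → Fin n → Fin (n + 1))
    (hp : RowInj col) (hno : ∀ T R c d, ¬ Bi col T R c d) : False := by
  classical
  have hrow := fun m => missing (col m) (fun r r' h => hp.1 m r r' h)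
  have hcolm := fun r => missing (fun m => col m r) (fun m m' h => hp.2 m m' r h)
  choose ml hml using hrow
  choose mr hmr using hcolm
  have ex : ∀ m c, c ≠ ml m → ∃ r, col m r = c := by
    intro m c hc
    by_contra! hcon
    exact hc ((hml m c).1 hcon)
  have ex' : ∀ r c, c ≠ mr r → ∃ m, col m r = c := by
    intro m c hc
    by_contra! hcon
    exact hc ((hmr m c).1 hcon)
  have two : ∀ c d, (∀ m, ml m ≠ c) → (∀ m, ml m ≠ d) → c = d := by
    intro c d hc hd
    by_contra hcd
    obtain ⟨f, hf⟩ := full_perm col hp c (fun m => ex m c (hc m).symm)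
    obtain ⟨g, hg⟩ := full_perm col hp d (fun m => ex m d (hd m).symm)
    obtain ⟨T, R, hB⟩ := bi_of_orbit col f g c d hcd ⟨0, by omega⟩ (fun v _ => ⟨hf v, hg v⟩)
    exact hno _ _ _ _ hB
  -- a colour seen in all rows iff seen in all columns
  have full_iff : ∀ c, (∀ m, ml m ≠ c) → (∀ r, mr r ≠ c) := by
    intro c hc r hr
    obtain ⟨f, hf⟩ := full_perm col hp c (fun m => ex m c (hc m).symm)
    have := (hmr r c).2 hr.symm (f⁻¹ r)
    apply this
    have := hf (f⁻¹ r)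
    simpa using this
  have full_iff' : ∀ c, (∀ r, mr r ≠ c) → (∀ m, ml m ≠ c) := by
    intro c hc m hm
    obtain ⟨f, hf⟩ := full_perm (fun r m => col m r)
      ⟨fun r m m' h => hp.2 m m' r h, fun r r' m h => hp.1 m r r' h⟩ c
      (fun r => ex' r c (hc r).symm)
    have := (hml m c).2 hm.symm (f⁻¹ m)
    apply this
    have := hf (f⁻¹ m)
    simpa using this
  have mlinj := almost ml two
  have hP : ∃ P, ∀ m, ml m ≠ P := by
    obtain ⟨P, hP⟩ := missing ml mlinj
    exact ⟨P, (hP P).2 rfl⟩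
  obtain ⟨P, hP⟩ := hP
  -- for each row a partial permutation
  have part : ∀ a, ∃ b, ∃ σ : Equiv.Perm (Fin n), σ a = b ∧ (∀ m, m ≠ a → col m (σ m) = ml a) := by
    intro a
    have : ∃ b, mr b = ml a := by
      by_contra! hcon
      exact full_iff' _ hcon a rfl
    obtain ⟨b, hb⟩ := this
    obtain ⟨σ, h1, h2⟩ := part_perm col hp (ml a) a b
      (fun m hm => ex m _ (fun h => hm (mlinj h.symm))) ((hmr b _).2 hb.symm)
    exact ⟨b, σ, h1, h2⟩
  obtain ⟨p, hpP⟩ := full_perm col hp P (fun m => ex m P (hP m).symm)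
  have even1 : Equiv.Perm.sign (p⁻¹ * p) = 1 := by simp
  have hneg : (-1 : ℤˣ) ^ n = -1 := hodd.neg_one_pow
  -- relative to P everything is an n-cycle
  have single : ∀ a (σ : Equiv.Perm (Fin n)), (∀ m, m ≠ a → col m (σ m) = ml a) →
      ∀ u, (p⁻¹ * σ).SameCycle a u := by
    intro a σ hσ u
    by_contra hcon
    obtain ⟨T, R, hB⟩ := bi_of_orbit col p σ P (ml a) (hP a).symm u (fun v hv => by
      refine ⟨hpP v, hσ v ?_⟩
      rintro rfl
      exact hcon hv.symm)
    exact hno _ _ _ _ hB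
  have even : ∀ a (σ : Equiv.Perm (Fin n)), (∀ m, m ≠ a → col m (σ m) = ml a) →
      Equiv.Perm.sign (p⁻¹ * σ) = 1 := by
    intro a σ hσ
    rw [cycle_of_same (p⁻¹ * σ) a Finset.univ (by simp; omega) (by simp)
      (fun u _ => single a σ hσ u) (by simp)]
    simp [hneg]
  let a : Fin n := ⟨0, by omega⟩
  obtain ⟨b, σ, hσa, hσ⟩ := part a
  by_cases hj : col a b = P
  · -- `a` is fixed
    have hfix : (p⁻¹ * σ) a = a := by
      have : p a = b := hp.1 a _ _ ((hpP a).trans hj.symm)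
      rw [Equiv.Perm.mul_apply, hσa, ← this]; simp
    have := (single a σ hσ ⟨1, by omega⟩).eq_of_left hfix
    simp [a] at this
  · have : ∃ a', ml a' = col a b := by
      by_contra! hcon
      exact hj (two _ _ hcon hP)
    obtain ⟨a', ha'⟩ := this
    have hji : col a b ≠ ml a := (hml a (ml a)).2 rfl b
    have haa : a' ≠ a := by
      rintro rfl
      exact hji ha'.symm
    obtain ⟨b', τ, hτa, hτ⟩ := part a'
    have hτb : τ a = b := hp.1 a _ _ ((hτ a haa.symm).trans ha')
    have hfix : (σ⁻¹ * τ) a = a := by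
      rw [Equiv.Perm.mul_apply, hτb, ← hσa]; simp
    have hs : ∀ u, u ≠ a → (σ⁻¹ * τ).SameCycle a' u := by
      intro u hu
      by_contra hcon
      obtain ⟨T, R, hB⟩ := bi_of_orbit col σ τ (ml a) (ml a') (by rw [ha']; exact hji.symm) u
        (fun v hv => by
          refine ⟨hσ v ?_, hτ v ?_⟩
          · rintro rfl
            exact hu (hv.eq_of_right hfix)
          · rintro rfl
            exact hcon hv.symm)
      exact hno _ _ _ _ hB
    have hc : (Finset.univ.erase a).card = n - 1 := by simp
    have sg := cycle_of_same (σ⁻¹ * τ) a' (Finset.univ.erase a) (by omega) (by simp [haa])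
      (fun u hu => hs u (by simpa using hu)) (fun u hu => by
        have : u = a := by simpa using hu
        rw [this, hfix])
    have he : Even (n - 1) := by
      obtain ⟨q, hq⟩ := hodd
      exact ⟨q, by omega⟩
    rw [hc, he.neg_one_pow] at sg
    have s1 := even a σ hσ
    have s2 := even a' τ hτ
    have : σ⁻¹ * τ = (p⁻¹ * σ)⁻¹ * (p⁻¹ * τ) := by group
    rw [this, Equiv.Perm.sign_mul, Equiv.Perm.sign_inv, s1, s2] at sg
    exact absurd sg (by decide)

lemma upper {n : ℕ} (hn : 3 ≤ n)
    (πs : Fin n → Equiv.Perm (Fin n)) (πM : Equiv.Perm (Fin n))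
    (h1 : ∀ i j : Fin n, i ≠ j →
      ((πs i)⁻¹ * πs j).IsCycle ∧ ((πs i)⁻¹ * πs j).support = Finset.univ)
    (h2 : ∀ i : Fin n, ∃! u : Fin n, (πM⁻¹ * πs i) u = u)
    (h3 : ∃ I₁ I₂ : Set (Fin n), Disjoint I₁ I₂ ∧ I₁ ∪ I₂ = Set.univ ∧
      ∀ (i : Fin n) (u : Fin n),
        2 ≤ (orbit (⇑(πM⁻¹ * πs i)) u).ncard →
          ((orbit (⇑(πM⁻¹ * πs i)) u) ∩ I₁).Nonempty ∧
          ((orbit (⇑(πM⁻¹ * πs i)) u) ∩ I₂).Nonempty) :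
    ∃ col : Fin n → Fin n → Fin (n + 2), RowInj col ∧ ∀ T R c d, ¬ Bi col T R c d := by
  classical
  obtain ⟨I₁, I₂, hdisj, hun, h3⟩ := h3
  have hinj : ∀ m, Function.Injective (fun i => πs i m) := by
    intro m i j hij
    by_contra hne
    have : m ∈ ((πs i)⁻¹ * πs j).support := by rw [(h1 i j hne).2]; simp
    rw [Equiv.Perm.mem_support] at this
    apply this
    simp only at hij
    simp [← hij]
  have hex : ∀ m r, ∃ i, πs i m = r := fun m r => (Finite.injective_iff_surjective.1 (hinj m)) r
  choose ix hix using hex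
  have hixu : ∀ m i, ix m (πs i m) = i := fun m i => hinj m (hix m _)
  let A : Fin (n + 2) := ⟨n, by omega⟩
  let B : Fin (n + 2) := ⟨n + 1, by omega⟩
  let F : Fin n → Fin (n + 2) := fun i => ⟨i, by omega⟩
  have hAB : A ≠ B := by simp [A, B]
  have hFA : ∀ i, F i ≠ A := fun i => by simp only [F, A, ne_eq, Fin.mk.injEq]; omega
  have hFB : ∀ i, F i ≠ B := fun i => by simp only [F, B, ne_eq, Fin.mk.injEq]; omega
  have hF : ∀ i j, F i = F j → i = j := fun i j h => by
    simp only [F, Fin.mk.injEq] at h; exact Fin.ext h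
  have hsurj : ∀ c : Fin (n + 2), c = A ∨ c = B ∨ ∃ i, c = F i := by
    intro c
    by_cases h : c.1 < n
    · exact Or.inr (Or.inr ⟨⟨c, h⟩, rfl⟩)
    · by_cases h' : c.1 = n
      · exact Or.inl (Fin.ext h')
      · exact Or.inr (Or.inl (Fin.ext (by simp only [B]; omega)))
  let col : Fin n → Fin n → Fin (n + 2) := fun m r =>
    if πM m = r then (if m ∈ I₁ then A else B) else F (ix m r)
  have cA : ∀ m r, col m r = A → πM m = r ∧ m ∈ I₁ := by
    intro m r h
    simp only [col] at h
    grind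
  have cB : ∀ m r, col m r = B → πM m = r ∧ m ∈ I₂ := by
    intro m r h
    have : m ∈ I₁ ∪ I₂ := by rw [hun]; trivial
    simp only [col] at h
    have := (Set.mem_union _ _ _).1 this
    grind
  have cF : ∀ m r i, col m r = F i → πs i m = r ∧ πM m ≠ r := by
    intro m r i h
    simp only [col] at h
    grind
  refine ⟨col, ⟨?_, ?_⟩, ?_⟩
  · intro m r r' h
    rcases hsurj (col m r) with hc | hc | ⟨i, hc⟩
    · exact (cA _ _ hc).1.symm.trans (cA _ _ (h.symm.trans hc)).1
    · rw [← (cB _ _ hc).1, ← (cB _ _ (h.symm.trans hc)).1]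
    · rw [← (cF _ _ _ hc).1, ← (cF _ _ _ (h.symm.trans hc)).1]
  · intro m m' r h
    rcases hsurj (col m r) with hc | hc | ⟨i, hc⟩
    · exact πM.injective ((cA _ _ hc).1.trans (cA _ _ (h.symm.trans hc)).1.symm)
    · exact πM.injective ((cB _ _ hc).1.trans (cB _ _ (h.symm.trans hc)).1.symm)
    · exact (πs i).injective ((cF _ _ _ hc).1.trans (cF _ _ _ (h.symm.trans hc)).1.symm)
  have symm : ∀ T R c d, Bi col T R c d → Bi col T R d c := by
    rintro T R c d ⟨a, b, e, f⟩
    exact ⟨a.symm, b, fun m hm => (e m hm).symm, fun m hm => (f m hm).symm⟩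
  -- orbit closure
  have clos : ∀ (T R : Set (Fin n)) c d (f g : Equiv.Perm (Fin n)),
      Bi col T R c d → (∀ m r, col m r = c → f m = r) → (∀ m r, col m r = d → g m = r) →
      ∀ m ∈ T, (f⁻¹ * g) m ∈ T := by
    rintro T R c d f g ⟨_, _, hT, hR⟩ hf hg m hm
    obtain ⟨_, r, hr, hrd⟩ := hT m hm
    obtain ⟨⟨m', hm', hmc⟩, _⟩ := hR r hr
    have : (f⁻¹ * g) m = m' := by
      rw [Equiv.Perm.mul_apply, hg m r hrd, ← hf m' r hmc]; simp
    rwa [this]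
  have iter : ∀ (T : Set (Fin n)) (f : Equiv.Perm (Fin n)), (∀ m ∈ T, f m ∈ T) →
      ∀ m ∈ T, ∀ k : ℕ, f^[k] m ∈ T := by
    intro T f hf m hm k
    induction k with
    | zero => exact hm
    | succ k ih => rw [Function.iterate_succ_apply']; exact hf _ ih
  have noAB : ∀ T R, ¬ Bi col T R A B := by
    rintro T R ⟨_, ⟨m, hm⟩, hT, _⟩
    obtain ⟨⟨r, _, hr⟩, ⟨r', _, hr'⟩⟩ := hT m hm
    have e1 := cA _ _ hr
    have e2 := cB _ _ hr'
    exact (Set.disjoint_left.1 hdisj) e1.2 e2.2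
  have orb : ∀ T R c i, Bi col T R c (F i) → (∀ m r, col m r = c → πM m = r) →
      ∃ m ∈ T, orbit (⇑(πM⁻¹ * πs i)) m ⊆ T ∧ 2 ≤ (orbit (⇑(πM⁻¹ * πs i)) m).ncard := by
    rintro T R c i hB hc
    have hcl := clos T R c (F i) πM (πs i) hB hc (fun m r h => (cF m r i h).1)
    obtain ⟨_, ⟨m, hm⟩, hT, _⟩ := hB
    refine ⟨m, hm, ?_, ?_⟩
    · rintro _ ⟨k, rfl⟩
      exact iter T _ hcl m hm k
    · obtain ⟨_, r, hr, hrd⟩ := hT m hm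
      have e := cF _ _ _ hrd
      have hne : m ≠ (πM⁻¹ * πs i) m := by
        intro h
        rw [Equiv.Perm.mul_apply, Equiv.Perm.eq_inv_iff_eq, e.1] at h
        exact e.2 h
      rw [← Set.ncard_pair hne]
      apply Set.ncard_le_ncard _ (Set.toFinite _)
      rintro x (rfl | rfl)
      · exact ⟨0, rfl⟩
      · exact ⟨1, rfl⟩
  have noAF : ∀ T R i, ¬ Bi col T R A (F i) := by
    intro T R i hB
    obtain ⟨m, hm, hsub, hcard⟩ := orb T R A i hB (fun m r h => (cA m r h).1)
    obtain ⟨x, hx, hx2⟩ := (h3 i m hcard).2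
    obtain ⟨⟨r, _, hr⟩, _⟩ := hB.2.2.1 x (hsub hx)
    exact (Set.disjoint_left.1 hdisj) (cA _ _ hr).2 hx2
  have noBF : ∀ T R i, ¬ Bi col T R B (F i) := by
    intro T R i hB
    obtain ⟨m, hm, hsub, hcard⟩ := orb T R B i hB (fun m r h => (cB m r h).1)
    obtain ⟨x, hx, hx2⟩ := (h3 i m hcard).1
    obtain ⟨⟨r, _, hr⟩, _⟩ := hB.2.2.1 x (hsub hx)
    exact (Set.disjoint_left.1 hdisj) hx2 (cB _ _ hr).2
  have noFF : ∀ T R i j, ¬ Bi col T R (F i) (F j) := by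
    intro T R i j hB
    have hij : i ≠ j := by
      rintro rfl
      exact hB.1 rfl
    have hcl := clos T R (F i) (F j) (πs i) (πs j) hB (fun m r h => (cF m r i h).1)
      (fun m r h => (cF m r j h).1)
    obtain ⟨_, ⟨m, hm⟩, hT, _⟩ := hB
    obtain ⟨hcyc, hsup⟩ := h1 i j hij
    obtain ⟨u, hu, _⟩ := h2 i
    have hmem : ∀ x, ((πs i)⁻¹ * πs j) x ≠ x := fun x => by
      rw [← Equiv.Perm.mem_support, hsup]; simp
    obtain ⟨k, hk⟩ := hcyc.exists_pow_eq (hmem m) (hmem u)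
    have huT : u ∈ T := by
      rw [← hk, ← Equiv.Perm.iterate_eq_pow]
      exact iter T _ hcl m hm k
    obtain ⟨⟨r, _, hr⟩, _⟩ := hT u huT
    have e := cF _ _ _ hr
    rw [Equiv.Perm.mul_apply, Equiv.Perm.inv_eq_iff_eq, e.1] at hu
    exact e.2 hu.symm
  intro T R c d hB
  rcases hsurj c with rfl | rfl | ⟨i, rfl⟩ <;> rcases hsurj d with rfl | rfl | ⟨j, rfl⟩
  · exact hB.1 rfl
  · exact noAB _ _ hB
  · exact noAF _ _ _ hB
  · exact noAB _ _ (symm _ _ _ _ hB)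
  · exact hB.1 rfl
  · exact noBF _ _ _ hB
  · exact noAF _ _ _ (symm _ _ _ _ hB)
  · exact noBF _ _ _ (symm _ _ _ _ hB)
  · exact noFF _ _ _ _ hB

lemma exists_coloring {n k : ℕ} (col : Fin n → Fin n → Fin k) :
    ∃ C : (KB n).edgeSet → Fin k, colOf C = col := by
  choose m r h he using @edge_form n
  refine ⟨fun e => col (m e) (r e), ?_⟩
  funext a b
  have := he ⟨s(Sum.inl a, Sum.inr b), by simp [KB]⟩
  have hh := congrArg Subtype.val this
  simp at hh
  unfold colOf
  exact congrArg₂ col hh.1.symm hh.2.symm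

/-- The general framework: let `n ≥ 3` be odd, let `π₀, …, π_{n-1}` and `π` be
permutations of `Fin n` such that (i) each `πᵢ⁻¹ ∘ πⱼ` (`i ≠ j`) is an `n`-cycle,
(ii) each `π⁻¹ ∘ πᵢ` has exactly one fixed point, and (iii) `Fin n` is partitioned
into `I₁ ⊔ I₂` meeting every orbit of size `≥ 2` of every `π⁻¹ ∘ πᵢ`.  Then
`K_{n,n}` admits an acyclic proper edge coloring with `n + 2` colors, and
consequently `a'(K_{n,n}) = n + 2`. -/
theorem stmt7 (n : ℕ) (hn : 3 ≤ n) (hodd : Odd n)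
    (πs : Fin n → Equiv.Perm (Fin n)) (πM : Equiv.Perm (Fin n))
    (h1 : ∀ i j : Fin n, i ≠ j →
      ((πs i)⁻¹ * πs j).IsCycle ∧ ((πs i)⁻¹ * πs j).support = Finset.univ)
    (h2 : ∀ i : Fin n, ∃! u : Fin n, (πM⁻¹ * πs i) u = u)
    (h3 : ∃ I₁ I₂ : Set (Fin n), Disjoint I₁ I₂ ∧ I₁ ∪ I₂ = Set.univ ∧
      ∀ (i : Fin n) (u : Fin n),
        2 ≤ (orbit (⇑(πM⁻¹ * πs i)) u).ncard →
          ((orbit (⇑(πM⁻¹ * πs i)) u) ∩ I₁).Nonempty ∧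
          ((orbit (⇑(πM⁻¹ * πs i)) u) ∩ I₂).Nonempty) :
    (∃ C : (completeBipartiteGraph (Fin n) (Fin n)).edgeSet → Fin (n + 2),
      IsProperEdgeColoring (completeBipartiteGraph (Fin n) (Fin n)) C ∧
      IsAcyclicEdgeColoring (completeBipartiteGraph (Fin n) (Fin n)) C) ∧
    acyclicChromaticIndex (completeBipartiteGraph (Fin n) (Fin n)) = n + 2 := by
  have hup : ∃ C : (completeBipartiteGraph (Fin n) (Fin n)).edgeSet → Fin (n + 2),
      IsProperEdgeColoring (completeBipartiteGraph (Fin n) (Fin n)) C ∧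
      IsAcyclicEdgeColoring (completeBipartiteGraph (Fin n) (Fin n)) C := by
    obtain ⟨col, hp, hno⟩ := upper hn πs πM h1 h2 h3
    obtain ⟨C, rfl⟩ := exists_coloring col
    exact ⟨C, (proper_iff C).2 hp, bi_of_cycle C hp hno⟩
  refine ⟨hup, le_antisymm (Nat.sInf_le hup) ?_⟩
  refine le_csInf ⟨n + 2, hup⟩ ?_
  intro k hkm
  obtain ⟨C, hC, hA⟩ := Set.mem_ofPred_eq.mp hkm
  by_contra hk
  have hp := (proper_iff C).1 hC
  have hle : k ≤ n + 1 := by omega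
  have hcast := Fin.castLE_injective hle
  refine lower hn hodd (fun m r => Fin.castLE hle (colOf C m r))
    ⟨fun m r r' h => hp.1 m r r' (hcast h), fun m m' r h => hp.2 m m' r (hcast h)⟩ ?_
  rintro T R c d ⟨hcd, hne, hT, hR⟩
  obtain ⟨m, hm⟩ := hne
  obtain ⟨⟨r, _, rfl⟩, ⟨r', _, rfl⟩⟩ := hT m hm
  refine not_bi_of_acyclic C hA T R (colOf C m r) (colOf C m r') ⟨fun h => hcd (congrArg _ h), ⟨m, hm⟩, ?_, ?_⟩
  · intro x hx
    obtain ⟨⟨s, hs, e⟩, ⟨s', hs', e'⟩⟩ := hT x hx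
    exact ⟨⟨s, hs, hcast e⟩, ⟨s', hs', hcast e'⟩⟩
  · intro x hx
    obtain ⟨⟨s, hs, e⟩, ⟨s', hs', e'⟩⟩ := hR x hx
    exact ⟨⟨s, hs, hcast e⟩, ⟨s', hs', hcast e'⟩⟩
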